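/- Fix α, σ > 0 and η ∈ (0,1]. Define f(q) = α(1−η)·i_v(q/σ²) + (α/(2σ²))(1−q) − (1/2)(q + log(1−q)) for q ∈ [0,1), where i_v(γ) = γ − E[log cosh(√γ Z + γ)] for Z standard Gaussian. Then f admits a unique critical point on [0,1), and this critical point is the unique minimizer of f on [0,1). -/

import Mathlib

open MeasureTheory ProbabilityTheory Real

lemma aux_logcosh (x : ℝ) : |Real.log (Real.cosh x)| ≤ |x| := by
  rw [abs_of_nonneg (Real.log_nonneg (Real.one_le_cosh x))]
  rw [Real.log_le_iff_le_exp (Real.cosh_pos x), ← Real.cosh_abs, Real.cosh_eq]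
  have : Real.exp (-|x|) ≤ Real.exp |x| := Real.exp_le_exp.2 (by linarith [abs_nonneg x])
  linarith

lemma aux_tanh (x : ℝ) : |Real.sinh x / Real.cosh x| ≤ 1 := by
  rw [abs_div, abs_of_pos (Real.cosh_pos x), div_le_one (Real.cosh_pos x), abs_le]
  have := Real.exp_pos x
  have := Real.exp_pos (-x)
  constructor <;> rw [Real.sinh_eq, Real.cosh_eq] <;> linarith

lemma aux_anti : AntitoneOn (fun r : ℝ => Real.sinh r / (r * Real.cosh r ^ 2)) (Set.Ioi 0) := by
  have hd : ∀ r ∈ Set.Ioi (0:ℝ), HasDerivAt (fun r : ℝ => Real.sinh r / (r * Real.cosh r ^ 2))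
      ((Real.cosh r * (r * Real.cosh r ^ 2) - Real.sinh r * (1 * Real.cosh r ^ 2 +
        r * (2 * Real.cosh r ^ 1 * Real.sinh r))) / (r * Real.cosh r ^ 2) ^ 2) r := by
    intro r hr
    have hr : 0 < r := hr
    have hc := Real.cosh_pos r
    exact (Real.hasDerivAt_sinh r).div
      ((hasDerivAt_id r).mul (by simpa using (Real.hasDerivAt_cosh r).fun_pow 2)) (by positivity)
  apply antitoneOn_of_deriv_nonpos (convex_Ioi 0)
  · exact fun r hr => (hd r hr).continuousAt.continuousWithinAt
  · rw [interior_Ioi]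
    exact fun r hr => (hd r hr).differentiableAt.differentiableWithinAt
  · rw [interior_Ioi]
    intro r hr
    rw [(hd r hr).deriv]
    have hr : 0 < r := hr
    have hc := Real.one_le_cosh r
    have hs : r ≤ Real.sinh r := Real.self_le_sinh_iff.2 hr.le
    have hcs := Real.cosh_sq r
    apply div_nonpos_of_nonpos_of_nonneg _ (by positivity)
    have e : Real.cosh r * (r * Real.cosh r ^ 2) - Real.sinh r * (1 * Real.cosh r ^ 2 +
        r * (2 * Real.cosh r ^ 1 * Real.sinh r))
        = Real.cosh r * (r * Real.cosh r ^ 2 - Real.sinh r * Real.cosh r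
          - 2 * r * Real.sinh r ^ 2) := by ring
    rw [e, hcs]
    apply mul_nonpos_of_nonneg_of_nonpos (by linarith)
    nlinarith [mul_nonneg hr.le (sq_nonneg (Real.sinh r)),
      mul_nonneg (hr.le.trans hs) (sub_nonneg.2 hc)]

lemma aux_convex1 : ConvexOn ℝ (Set.Ici 0) (fun s : ℝ => (Real.cosh (Real.sqrt s))⁻¹) := by
  have hd : ∀ s ∈ Set.Ioi (0:ℝ), HasDerivAt (fun s : ℝ => (Real.cosh (Real.sqrt s))⁻¹)
      (-(1/2) * (Real.sinh √s / (√s * Real.cosh √s ^ 2))) s := by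
    intro s hs
    have hs : 0 < s := hs
    have h := ((Real.hasDerivAt_sqrt hs.ne').cosh).inv (Real.cosh_pos _).ne'
    refine h.congr_deriv ?_
    have h1 := (Real.sqrt_pos.2 hs).ne'
    have h2 := (Real.cosh_pos √s).ne'
    field_simp
  apply MonotoneOn.convexOn_of_deriv (convex_Ici 0)
  · apply Continuous.continuousOn
    exact (Real.continuous_cosh.comp Real.continuous_sqrt).inv₀ (fun x => (Real.cosh_pos _).ne')
  · rw [interior_Ici]
    exact fun r hr => (hd r hr).differentiableAt.differentiableWithinAt
  · rw [interior_Ici]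
    intro a ha b hb hab
    rw [(hd a ha).deriv, (hd b hb).deriv]
    have := aux_anti (Real.sqrt_pos.2 ha) (Real.sqrt_pos.2 hb) (Real.sqrt_le_sqrt hab)
    simp only at this
    linarith

lemma aux_convex2 (z : ℝ) : ConvexOn ℝ (Set.Ici 0)
    (fun s : ℝ => Real.exp (-s/2) * (Real.cosh (Real.sqrt s * z))⁻¹) := by
  have key : ∀ s ∈ Set.Ici (0:ℝ), Real.cosh (√s * z) = Real.cosh √(s * z^2) := by
    intro s hs
    rw [Real.sqrt_mul hs, Real.sqrt_sq_eq_abs, ← Real.cosh_abs (√s * z), abs_mul,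
      abs_of_nonneg (Real.sqrt_nonneg s)]
  have h1 : ConvexOn ℝ (Set.Ici 0) (fun s : ℝ => (Real.cosh (Real.sqrt (s * z^2)))⁻¹) := by
    refine ⟨convex_Ici 0, ?_⟩
    intro x hx y hy a b ha hb hab
    have h := aux_convex1.2 (mul_nonneg hx (sq_nonneg z) : x * z^2 ∈ Set.Ici (0:ℝ))
      (mul_nonneg hy (sq_nonneg z) : y * z^2 ∈ Set.Ici (0:ℝ)) ha hb hab
    simp only [smul_eq_mul] at h ⊢
    convert h using 4
    ring
  have h2 : ConvexOn ℝ (Set.Ici 0) (fun s : ℝ => Real.exp (-s/2)) := by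
    refine ⟨convex_Ici 0, ?_⟩
    intro x hx y hy a b ha hb hab
    have h := convexOn_exp.2 (Set.mem_univ (-x/2)) (Set.mem_univ (-y/2)) ha hb hab
    simp only [smul_eq_mul] at h ⊢
    convert h using 2
    ring
  have a2 : AntitoneOn (fun s : ℝ => Real.exp (-s/2)) (Set.Ici 0) := by
    intro x _ y _ h
    exact Real.exp_le_exp.2 (by linarith)
  have a1 : AntitoneOn (fun s : ℝ => (Real.cosh (Real.sqrt (s * z^2)))⁻¹) (Set.Ici 0) := by
    intro x _ y _ h
    apply inv_anti₀ (Real.cosh_pos _)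
    rw [Real.cosh_le_cosh, abs_of_nonneg (Real.sqrt_nonneg _), abs_of_nonneg (Real.sqrt_nonneg _)]
    exact Real.sqrt_le_sqrt (mul_le_mul_of_nonneg_right h (sq_nonneg z))
  have := h2.mul h1 (fun x _ => (Real.exp_pos _).le)
    (fun x _ => (inv_pos.2 (Real.cosh_pos _)).le) (a2.monovaryOn a1)
  refine this.congr ?_
  intro s hs
  simp only [Pi.mul_apply, key s hs]

noncomputable def mm (s : ℝ) : ℝ :=
  ∫ z, Real.exp (-s/2) * (Real.cosh (Real.sqrt s * z))⁻¹ ∂(gaussianReal 0 1)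

lemma aux_sech (x : ℝ) : 0 ≤ (Real.cosh x)⁻¹ ∧ (Real.cosh x)⁻¹ ≤ 1 :=
  ⟨(inv_pos.2 (Real.cosh_pos _)).le, inv_le_one_of_one_le₀ (Real.one_le_cosh x)⟩

lemma aux_sech_cont (r : ℝ) : Continuous (fun z : ℝ => (Real.cosh (r * z))⁻¹) :=
  (Real.continuous_cosh.comp (continuous_const.mul continuous_id)).inv₀
    (fun x => (Real.cosh_pos _).ne')

lemma aux_sech_int (r : ℝ) :
    Integrable (fun z : ℝ => (Real.cosh (r * z))⁻¹) (gaussianReal 0 1) := by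
  refine Integrable.of_bound (aux_sech_cont r).aestronglyMeasurable 1 ?_
  refine Filter.Eventually.of_forall fun z => ?_
  rw [Real.norm_eq_abs, abs_of_nonneg (aux_sech _).1]
  exact (aux_sech _).2

lemma mm_convex : ConvexOn ℝ (Set.Ici 0) mm := by
  refine ⟨convex_Ici 0, ?_⟩
  intro x hx y hy a b ha hb hab
  simp only [mm, smul_eq_mul]
  have hi : ∀ s : ℝ, Integrable (fun z : ℝ => Real.exp (-s/2) * (Real.cosh (√s * z))⁻¹)
    (gaussianReal 0 1) := fun s => (aux_sech_int _).const_mul _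
  rw [← integral_const_mul, ← integral_const_mul,
    ← integral_add ((hi x).const_mul a) ((hi y).const_mul b)]
  apply integral_mono (hi _) (((hi x).const_mul a).add ((hi y).const_mul b))
  intro z
  exact (aux_convex2 z).2 hx hy ha hb hab

lemma mm_nonneg (s : ℝ) : 0 ≤ mm s :=
  integral_nonneg fun z => mul_nonneg (Real.exp_pos _).le (aux_sech _).1

lemma mm_le_one (s : ℝ) (hs : 0 ≤ s) : mm s ≤ 1 := by
  have : mm s ≤ ∫ z, (1:ℝ) ∂(gaussianReal 0 1) := by
    apply integral_mono ((aux_sech_int _).const_mul _) (integrable_const _)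
    intro z
    have h1 : Real.exp (-s/2) ≤ 1 := Real.exp_le_one_iff.2 (by linarith)
    exact mul_le_one₀ h1 (aux_sech _).1 (aux_sech _).2
  simpa using this

lemma aux_id_int : Integrable (fun z : ℝ => z) (gaussianReal 0 1) :=
  (memLp_id_gaussianReal 1).integrable (by simp)

lemma aux_odd (r : ℝ) : ∫ z, z * (Real.cosh (r * z))⁻¹ ∂(gaussianReal 0 1) = 0 := by
  rw [integral_gaussianReal_eq_integral_smul one_ne_zero]
  have h := integral_neg_eq_self
    (fun z : ℝ => gaussianPDFReal 0 1 z • (z * (Real.cosh (r * z))⁻¹)) volume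
  have e : ∀ z : ℝ, gaussianPDFReal 0 1 (-z) • (-z * (Real.cosh (r * -z))⁻¹)
      = -(gaussianPDFReal 0 1 z • (z * (Real.cosh (r * z))⁻¹)) := by
    intro z
    simp [gaussianPDFReal, Real.cosh_neg]
  simp only [e, integral_neg] at h
  linarith

lemma aux_shift (γ : ℝ) (hγ : 0 < γ) :
    ∫ z, Real.exp (-(√γ * z + γ)) * (Real.cosh (√γ * z + γ))⁻¹ * (z / (2 * √γ) + 1)
      ∂(gaussianReal 0 1) = 1 / 2 * mm γ := by
  have hr : 0 < √γ := Real.sqrt_pos.2 hγ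
  have hrr : √γ * √γ = γ := Real.mul_self_sqrt hγ.le
  have hodd := aux_odd √γ
  have hI : Integrable (fun z : ℝ => z * (Real.cosh (√γ * z))⁻¹) (gaussianReal 0 1) := by
    refine aux_id_int.mono (continuous_id.mul (aux_sech_cont _)).aestronglyMeasurable ?_
    refine Filter.Eventually.of_forall fun z => ?_
    rw [norm_mul, Real.norm_eq_abs (_⁻¹), abs_of_nonneg (aux_sech _).1]
    exact mul_le_of_le_one_right (norm_nonneg _) (aux_sech _).2
  have h1 : ∫ w, (Real.exp (-γ/2) / (2 * √γ) * (w * (Real.cosh (√γ * w))⁻¹)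
      + 1 / 2 * (Real.exp (-γ/2) * (Real.cosh (√γ * w))⁻¹)) ∂(gaussianReal 0 1)
      = 1 / 2 * mm γ := by
    rw [integral_add (hI.const_mul _) (((aux_sech_int _).const_mul _).const_mul _),
      integral_const_mul, hodd, integral_const_mul, mm]
    ring
  rw [← h1, integral_gaussianReal_eq_integral_smul one_ne_zero,
    integral_gaussianReal_eq_integral_smul one_ne_zero]
  symm
  rw [← integral_add_right_eq_self (μ := volume) _ √γ]
  symm
  congr 1
  funext z
  have hx : √γ * (z + √γ) = √γ * z + γ := by rw [mul_add, hrr]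
  have hp : gaussianPDFReal 0 1 z * Real.exp (-(√γ * z + γ))
      = gaussianPDFReal 0 1 (z + √γ) * Real.exp (-γ/2) := by
    simp only [gaussianPDFReal, mul_assoc, ← Real.exp_add]
    congr 2
    simp only [NNReal.coe_one]
    linear_combination (1/2) * hrr
  simp only [smul_eq_mul, hx]
  have e : z / (2 * √γ) + 1 = (z + √γ) / (2 * √γ) + 1 / 2 := by field_simp; ring
  rw [e]
  linear_combination ((Real.cosh (√γ * z + γ))⁻¹ * ((z + √γ) / (2 * √γ) + 1 / 2)) * hp

lemma aux_G_meas (γ : ℝ) : Continuous (fun z : ℝ => Real.log (Real.cosh (√γ * z + γ))) :=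
  (Real.continuous_cosh.comp (by fun_prop)).log (fun z => (Real.cosh_pos _).ne')

lemma aux_G_int (γ : ℝ) :
    Integrable (fun z : ℝ => Real.log (Real.cosh (√γ * z + γ))) (gaussianReal 0 1) := by
  refine ((aux_id_int.const_mul √γ).add (integrable_const γ)).mono
    (aux_G_meas γ).aestronglyMeasurable ?_
  exact Filter.Eventually.of_forall fun z => aux_logcosh _

lemma iv_deriv (γ : ℝ) (hγ : 0 < γ) :
    HasDerivAt (fun γ : ℝ => γ - ∫ z, Real.log (Real.cosh (√γ * z + γ)) ∂(gaussianReal 0 1))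
      (1 / 2 * mm γ) γ := by
  have hr : 0 < √γ := Real.sqrt_pos.2 hγ
  have hl : Integrable (fun z : ℝ => z / (2 * √γ) + 1) (gaussianReal 0 1) :=
    (aux_id_int.div_const _).add (integrable_const _)
  have key := hasDerivAt_integral_of_dominated_loc_of_deriv_le (μ := gaussianReal 0 1)
    (F := fun γ z : ℝ => Real.log (Real.cosh (√γ * z + γ)))
    (F' := fun γ z : ℝ => (Real.sinh (√γ * z + γ) / Real.cosh (√γ * z + γ)) * (z / (2 * √γ) + 1))
    (x₀ := γ) (s := Set.Ioi (γ / 4)) (bound := fun z => |z| / √γ + 1)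
    (Ioi_mem_nhds (by linarith))
    (Filter.Eventually.of_forall fun x => (aux_G_meas x).aestronglyMeasurable)
    (aux_G_int γ)
    (by
      apply Continuous.aestronglyMeasurable
      refine Continuous.mul (Continuous.div (Real.continuous_sinh.comp (by fun_prop))
        (Real.continuous_cosh.comp (by fun_prop)) fun z => (Real.cosh_pos _).ne') (by fun_prop))
    (by
      refine Filter.Eventually.of_forall fun z x hx => ?_
      have hx : γ / 4 < x := hx
      have hs : √γ / 2 ≤ √x := by
        apply Real.le_sqrt_of_sq_le
        rw [div_pow, Real.sq_sqrt hγ.le]; linarith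
      rw [norm_mul]
      refine (mul_le_of_le_one_left (norm_nonneg _) (aux_tanh _)).trans ?_
      refine (norm_add_le _ _).trans ?_
      rw [norm_div, norm_one, Real.norm_eq_abs, Real.norm_eq_abs,
        abs_of_nonneg (by positivity : 0 ≤ 2 * √x)]
      have : |z| / (2 * √x) ≤ |z| / √γ :=
        div_le_div_of_nonneg_left (abs_nonneg z) hr (by linarith)
      linarith)
    ((aux_id_int.abs.div_const _).add (integrable_const _))
    (by
      refine Filter.Eventually.of_forall fun z x hx => ?_
      have hx : γ / 4 < x := hx
      have hx0 : 0 < x := by linarith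
      have h := ((((Real.hasDerivAt_sqrt hx0.ne').mul_const z).add
        (hasDerivAt_id x)).cosh).log (Real.cosh_pos _).ne'
      refine h.congr_deriv ?_
      simp only [Pi.add_apply, id]
      ring)
  have hid : ∫ z, (Real.sinh (√γ * z + γ) / Real.cosh (√γ * z + γ)) * (z / (2 * √γ) + 1)
      ∂(gaussianReal 0 1) = 1 - 1 / 2 * mm γ := by
    have e : ∀ z : ℝ, Real.exp (-(√γ * z + γ)) * (Real.cosh (√γ * z + γ))⁻¹ * (z / (2 * √γ) + 1)
        = (z / (2 * √γ) + 1)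
          - (Real.sinh (√γ * z + γ) / Real.cosh (√γ * z + γ)) * (z / (2 * √γ) + 1) := by
      intro z
      rw [← Real.cosh_sub_sinh]
      have := (Real.cosh_pos (√γ * z + γ)).ne'
      field_simp
    have h := aux_shift γ hγ
    simp only [e] at h
    rw [integral_sub hl key.1, integral_add (aux_id_int.div_const _) (integrable_const _),
      integral_div, integral_id_gaussianReal] at h
    simp at h
    simp
    linarith
  have := (hasDerivAt_id γ).sub key.2
  rw [hid] at this
  exact this.congr_deriv (by ring)

lemma iv_cont :
    ContinuousAt (fun γ : ℝ => γ - ∫ z, Real.log (Real.cosh (√γ * z + γ)) ∂(gaussianReal 0 1))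
      0 := by
  refine continuousAt_id.sub ?_
  refine continuousAt_of_dominated (bound := fun z => |z| + 1)
    (Filter.Eventually.of_forall fun x => (aux_G_meas x).aestronglyMeasurable) ?_
    (aux_id_int.abs.add (integrable_const _)) ?_
  · filter_upwards [Ioo_mem_nhds (by norm_num : (-1:ℝ) < 0) one_pos] with x hx
    refine Filter.Eventually.of_forall fun z => (aux_logcosh _).trans ?_
    refine (abs_add_le _ _).trans ?_
    have h1 : √x ≤ 1 := Real.sqrt_le_one.2 hx.2.le
    have h2 : |x| ≤ 1 := abs_le.2 ⟨hx.1.le, hx.2.le⟩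
    rw [abs_mul, abs_of_nonneg (Real.sqrt_nonneg x)]
    have := mul_le_of_le_one_left (abs_nonneg z) h1
    linarith
  · refine Filter.Eventually.of_forall fun z => Continuous.continuousAt ?_
    exact (Real.continuous_cosh.comp (by fun_prop)).log (fun z => (Real.cosh_pos _).ne')

lemma aux_conv_inv : ConvexOn ℝ (Set.Ico (0:ℝ) 1) (fun q : ℝ => 1 / (1 - q)) := by
  refine ⟨convex_Ico 0 1, ?_⟩
  intro x hx y hy a b ha hb hab
  simp only [smul_eq_mul]
  have hp : 0 < 1 - x := by linarith [hx.2]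
  have hq : 0 < 1 - y := by linarith [hy.2]
  have e : 1 - (a * x + b * y) = a * (1 - x) + b * (1 - y) := by linear_combination (-1) * hab
  rw [e]
  generalize 1 - x = p at *
  generalize 1 - y = q at *
  have hs : 0 < a * p + b * q := by
    rcases ha.eq_or_lt with h | h
    · have : b = 1 := by linarith
      subst this; subst h; linarith
    · have := mul_pos h hp
      have := mul_nonneg hb hq.le
      linarith
  have e2 : a * (1 / p) + b * (1 / q) = (a * q + b * p) / (p * q) := by field_simp
  rw [e2, div_le_div_iff₀ hs (mul_pos hp hq)]
  have hb' : b = 1 - a := by linarith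
  subst hb'
  nlinarith [mul_nonneg (mul_nonneg ha hb) (sq_nonneg (p - q))]

/-- For `α, σ > 0` and `η ∈ (0,1]`, the free-energy potential
`f(q) = α(1−η)·i_v(q/σ²) + (α/(2σ²))(1−q) − (1/2)(q + log(1−q))`, where
`i_v(γ) = γ − E[log cosh(√γ Z + γ)]` for `Z ~ N(0,1)`, admits a unique critical point
on `[0,1)`, which is the unique minimizer of `f` on `[0,1)`. -/
theorem stmt11 (α σ η : ℝ) (hα : 0 < α) (hσ : 0 < σ) (hη : η ∈ Set.Ioc (0 : ℝ) 1)
    (iv : ℝ → ℝ)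
    (hiv : iv = fun γ : ℝ => γ - ∫ z, Real.log (Real.cosh (Real.sqrt γ * z + γ))
        ∂(gaussianReal 0 1))
    (f : ℝ → ℝ)
    (hf : f = fun q : ℝ => α * (1 - η) * iv (q / σ ^ 2)
        + α / (2 * σ ^ 2) * (1 - q) - (1 / 2) * (q + Real.log (1 - q))) :
    (∃! q, q ∈ Set.Ico (0 : ℝ) 1 ∧ HasDerivAt f 0 q)
    ∧ ∀ q ∈ Set.Ico (0 : ℝ) 1, HasDerivAt f 0 q →
        ∀ x ∈ Set.Ico (0 : ℝ) 1, x ≠ q → f q < f x := by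
  obtain ⟨hη0, hη1⟩ := hη
  have hσ2 : 0 < σ ^ 2 := by positivity
  obtain ⟨A, hA⟩ : ∃ A, A = α / (2 * σ ^ 2) := ⟨_, rfl⟩
  have hA0 : 0 < A := by rw [hA]; positivity
  obtain ⟨F, hF⟩ : ∃ F : ℝ → ℝ, F = fun q =>
    A * (1 - η) * mm (q / σ ^ 2) - A + 1 / 2 * (1 / (1 - q) - 1) := ⟨_, rfl⟩
  have hc0 : 0 ≤ A * (1 - η) := mul_nonneg hA0.le (by linarith)
  -- derivative of `f`
  have hder : ∀ q ∈ Set.Ioo (0:ℝ) 1, HasDerivAt f (F q) q := by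
    intro q hq
    have hq1 : 1 - q ≠ 0 := by linarith [hq.2]
    have h1 : HasDerivAt iv (1 / 2 * mm (q / σ ^ 2)) (q / σ ^ 2) := by
      rw [hiv]; exact iv_deriv _ (div_pos hq.1 hσ2)
    have h2 : HasDerivAt (fun q : ℝ => iv (q / σ ^ 2)) (1 / 2 * mm (q / σ ^ 2) * (1 / σ ^ 2)) q :=
      h1.comp q ((hasDerivAt_id q).div_const _)
    have h3 : HasDerivAt (fun q : ℝ => 1 - q) (-1) q := by
      simpa using (hasDerivAt_id q).const_sub 1
    have h4 := h3.log hq1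
    have h5 := ((h2.const_mul (α * (1 - η))).add (h3.const_mul (α / (2 * σ ^ 2)))).sub
      (((hasDerivAt_id q).add h4).const_mul (1 / 2))
    rw [hf]
    refine h5.congr_deriv ?_
    rw [hF, hA]
    field_simp
    ring
  have hcont0 : ContinuousAt f 0 := by
    have h1 : ContinuousAt iv (0 / σ ^ 2) := by
      rw [zero_div, hiv]; exact iv_cont
    have h2 : ContinuousAt (fun q : ℝ => iv (q / σ ^ 2)) 0 :=
      ContinuousAt.comp (f := fun q : ℝ => q / σ ^ 2) h1 (by fun_prop)
    have h4 : ContinuousAt (fun q : ℝ => Real.log (1 - q)) 0 :=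
      ContinuousAt.log (by fun_prop) (by norm_num)
    rw [hf]
    fun_prop
  have hcont : ContinuousOn f (Set.Ico 0 1) := by
    intro q hq
    rcases hq.1.eq_or_lt with h | h
    · rw [← h]; exact hcont0.continuousWithinAt
    · exact (hder q ⟨h, hq.2⟩).continuousAt.continuousWithinAt
  -- convexity of `F`
  have hconv : ConvexOn ℝ (Set.Ico (0:ℝ) 1) F := by
    refine ⟨convex_Ico 0 1, ?_⟩
    intro x hx y hy a b ha hb hab
    have h1 := mm_convex.2 (div_nonneg hx.1 hσ2.le : x / σ ^ 2 ∈ Set.Ici (0:ℝ))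
      (div_nonneg hy.1 hσ2.le : y / σ ^ 2 ∈ Set.Ici (0:ℝ)) ha hb hab
    have h2 := aux_conv_inv.2 hx hy ha hb hab
    simp only [smul_eq_mul] at h1 h2 ⊢
    have e : a * (x / σ ^ 2) + b * (y / σ ^ 2) = (a * x + b * y) / σ ^ 2 := by ring
    rw [e] at h1
    have h3 := mul_le_mul_of_nonneg_left h1 hc0
    rw [hF]
    have hb' : b = 1 - a := by linarith
    subst hb'
    simp only
    linarith
  -- upper bound
  have hup : ∀ q, 0 ≤ q → F q ≤ -(A * η) + 1 / 2 * (1 / (1 - q) - 1) := by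
    intro q hq
    have := mul_le_mul_of_nonneg_left (mm_le_one (q / σ ^ 2) (div_nonneg hq hσ2.le)) hc0
    rw [hF]
    simp only
    linarith
  have hlow : ∀ q, -A + 1 / 2 * (1 / (1 - q) - 1) ≤ F q := by
    intro q
    have := mul_nonneg hc0 (mm_nonneg (q / σ ^ 2))
    rw [hF]
    simp only
    linarith
  have hAη : 0 < A * η := mul_pos hA0 hη0
  have hAη' : A * η ≤ A := mul_le_of_le_one_right hA0.le hη1
  have hF0 : F 0 < 0 := by
    have := hup 0 le_rfl
    norm_num at this
    linarith
  obtain ⟨q1, hq1⟩ : ∃ q1, q1 = 1 - 1 / (1 + A * η) := ⟨_, rfl⟩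
  obtain ⟨q2, hq2⟩ : ∃ q2, q2 = 1 - 1 / (1 + 2 * A + 2) := ⟨_, rfl⟩
  have hq1p : 0 < q1 := by
    rw [hq1, sub_pos, div_lt_one (by linarith)]; linarith
  have hq12 : q1 ≤ q2 := by
    rw [hq1, hq2]
    have : 1 / (1 + 2 * A + 2) ≤ 1 / (1 + A * η) :=
      one_div_le_one_div_of_le (by linarith) (by linarith)
    linarith
  have hq2l : q2 < 1 := by
    have : 0 < 1 / (1 + 2 * A + 2) := by positivity
    linarith
  have hneg : ∀ x, 0 ≤ x → x ≤ q1 → F x ≤ -(A * η / 2) := by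
    intro x hx hx1
    have h := hup x hx
    have h2 : 1 / (1 - x) ≤ 1 + A * η := by
      rw [div_le_iff₀ (by linarith), ← div_le_iff₀' (by linarith)]
      linarith
    linarith
  have hpos : 0 < F q2 := by
    have h := hlow q2
    have h2 : 1 / (1 - q2) = 1 + 2 * A + 2 := by rw [hq2]; simp
    rw [h2] at h
    linarith
  -- zero is not critical
  have hzero : ¬ HasDerivAt f 0 0 := by
    intro h0
    have hg : AntitoneOn (fun x => f x + A * η / 2 * x) (Set.Icc 0 q1) := by
      have hd : ∀ x ∈ Set.Ioo 0 q1,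
          HasDerivAt (fun x => f x + A * η / 2 * x) (F x + A * η / 2 * 1) x := fun x hx =>
        (hder x ⟨hx.1, by linarith [hx.2]⟩).add ((hasDerivAt_id x).const_mul _)
      apply antitoneOn_of_deriv_nonpos (convex_Icc 0 q1)
      · refine ContinuousOn.add (hcont.mono ?_) (by fun_prop)
        exact fun x hx => ⟨hx.1, by linarith [hx.2]⟩
      · rw [interior_Icc]
        exact fun x hx => (hd x hx).differentiableAt.differentiableWithinAt
      · rw [interior_Icc]
        intro x hx
        rw [(hd x hx).deriv]
        linarith [hneg x hx.1.le hx.2.le]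
    have h1 : HasDerivAt (fun x => f x + A * η / 2 * x) (0 + A * η / 2 * 1) 0 :=
      h0.add ((hasDerivAt_id (0:ℝ)).const_mul _)
    have h2 := (h1.hasDerivWithinAt (s := Set.Icc 0 q1)).derivWithin
      (uniqueDiffOn_Icc hq1p 0 ⟨le_rfl, hq1p.le⟩)
    have h3 := hg.derivWithin_nonpos (x := 0)
    rw [h2] at h3
    linarith
  -- critical points are zeros of `F`
  have hcrit : ∀ q ∈ Set.Ico (0:ℝ) 1, HasDerivAt f 0 q → 0 < q ∧ F q = 0 := by
    intro q hq h
    have hq0 : 0 < q := by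
      rcases hq.1.eq_or_lt with h' | h'
      · rw [← h'] at h; exact absurd h hzero
      · exact h'
    exact ⟨hq0, (hder q ⟨hq0, hq.2⟩).unique h⟩
  -- sign of `F`
  have hleft : ∀ q, 0 < q → q < 1 → F q = 0 → ∀ x, 0 < x → x < q → F x < 0 := by
    intro q hq0 hq1 hFq x hx hxq
    have h := hconv.2 (⟨le_rfl, one_pos⟩ : (0:ℝ) ∈ Set.Ico (0:ℝ) 1) ⟨hq0.le, hq1⟩
      (by rw [sub_nonneg, div_le_one hq0]; exact hxq.le : 0 ≤ 1 - x / q)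
      (by positivity : 0 ≤ x / q) (by ring)
    simp only [smul_eq_mul, hFq, mul_zero, zero_add, add_zero, div_mul_cancel₀ x hq0.ne'] at h
    have : 0 < 1 - x / q := by rw [sub_pos, div_lt_one hq0]; exact hxq
    nlinarith
  have hright : ∀ q, 0 < q → F q = 0 → ∀ x, q < x → x < 1 → 0 < F x := by
    intro q hq0 hFq x hqx hx1
    by_contra hcon
    push Not at hcon
    have hx0 : 0 < x := hq0.trans hqx
    have h := hconv.2 (⟨le_rfl, one_pos⟩ : (0:ℝ) ∈ Set.Ico (0:ℝ) 1) ⟨hx0.le, hx1⟩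
      (by rw [sub_nonneg, div_le_one hx0]; exact hqx.le : 0 ≤ 1 - q / x)
      (by positivity : 0 ≤ q / x) (by ring)
    simp only [smul_eq_mul, mul_zero, zero_add, div_mul_cancel₀ q hx0.ne', hFq] at h
    have h1 : 0 < 1 - q / x := by rw [sub_pos, div_lt_one hx0]; exact hqx
    have h2 : 0 < q / x := by positivity
    nlinarith
  refine ⟨?_, ?_⟩
  · have hFc : ContinuousOn F (Set.Icc q1 q2) := by
      have := hconv.continuousOn_interior
      rw [interior_Ico] at this
      exact this.mono fun x hx => ⟨by linarith [hx.1], by linarith [hx.2]⟩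
    obtain ⟨q, hq, hFq⟩ := intermediate_value_Icc hq12 hFc
      (⟨by linarith [hneg q1 hq1p.le le_rfl], hpos.le⟩ : (0:ℝ) ∈ Set.Icc (F q1) (F q2))
    have hq0 : 0 < q := by linarith [hq.1]
    have hq1' : q < 1 := by linarith [hq.2]
    refine ⟨q, ⟨⟨hq0.le, hq1'⟩, hFq ▸ hder q ⟨hq0, hq1'⟩⟩, ?_⟩
    rintro y ⟨hy, hyd⟩
    obtain ⟨hy0, hFy⟩ := hcrit y hy hyd
    rcases lt_trichotomy y q with h | h | h
    · exact absurd hFy (hleft q hq0 hq1' hFq y hy0 h).ne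
    · exact h
    · exact absurd hFy (hright q hq0 hFq y h hy.2).ne'
  · intro q hq hqd x hx hxq
    obtain ⟨hq0, hFq⟩ := hcrit q hq hqd
    rcases lt_or_gt_of_ne hxq with h | h
    · have hs : StrictAntiOn f (Set.Icc 0 q) := by
        apply strictAntiOn_of_deriv_neg (convex_Icc 0 q)
        · exact hcont.mono fun y hy => ⟨hy.1, by linarith [hy.2, hq.2]⟩
        · rw [interior_Icc]
          intro y hy
          rw [(hder y ⟨hy.1, by linarith [hy.2, hq.2]⟩).deriv]
          exact hleft q hq0 hq.2 hFq y hy.1 hy.2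
      exact hs ⟨hx.1, h.le⟩ ⟨hq0.le, le_rfl⟩ h
    · have hs : StrictMonoOn f (Set.Icc q x) := by
        apply strictMonoOn_of_deriv_pos (convex_Icc q x)
        · exact hcont.mono fun y hy => ⟨by linarith [hy.1], by linarith [hy.2, hx.2]⟩
        · rw [interior_Icc]
          intro y hy
          rw [(hder y ⟨by linarith [hy.1], by linarith [hy.2, hx.2]⟩).deriv]
          exact hright q hq0 hFq y hy.1 (by linarith [hy.2, hx.2])
      exact hs ⟨le_rfl, h.le⟩ ⟨h.le, le_rfl⟩ h
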